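/- arXiv:1909.08285 — 2 statements merged into one kernel-verified Lean document; each statement's English description precedes it below -/
import Mathlib

section
/- For every even integer r ≥ 2, χ_ρ(H(r)) = 5, and for every odd integer r ≥ 3, 6 ≤ χ_ρ(H(r)) ≤ 7. -/
/-- The `H`-graph `H(r)`: a 3-regular graph on vertices `(row, column)` with rows
`0 = u`, `1 = v`, `2 = w` and columns indexed by `ZMod (2r)`.  Edges: `u_i u_{i+1}`,
`w_i w_{i+1}`, `u_i v_i`, `v_i w_i` (indices mod `2r`), and `v_{2i} v_{2i+1}`. -/
def HGraph (r : ℕ) : SimpleGraph (Fin 3 × ZMod (2 * r)) :=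
  SimpleGraph.fromRel fun x y =>
    ((x.1 = 0 ∧ y.1 = 0 ∨ x.1 = 2 ∧ y.1 = 2) ∧ y.2 = x.2 + 1) ∨
    ((x.1 = 0 ∧ y.1 = 1 ∨ x.1 = 1 ∧ y.1 = 2) ∧ x.2 = y.2) ∨
    (x.1 = 1 ∧ y.1 = 1 ∧ ∃ i : ZMod (2 * r), x.2 = 2 * i ∧ y.2 = 2 * i + 1)

/-- A coloring `c : V → {1,…,k}` is an `S`-packing `k`-coloring for the sequence `s`
if vertices of the same color `i` are at distance greater than `s i`. -/
def IsPackingColoring {V : Type*} (G : SimpleGraph V) (k : ℕ) (s : ℕ → ℕ)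
    (c : V → ℕ) : Prop :=
  (∀ v, 1 ≤ c v ∧ c v ≤ k) ∧
  ∀ u v, u ≠ v → c u = c v → s (c u) < G.dist u v

/-- The `S`-packing chromatic number for the sequence `s`: the least `k` such that
`G` admits an `S`-packing `k`-coloring. -/
noncomputable def packingChromaticNumber {V : Type*} (G : SimpleGraph V)
    (s : ℕ → ℕ) : ℕ :=
  sInf {k | ∃ c : V → ℕ, IsPackingColoring G k s c}

/-!
The graph `H(r)` is covered by an infinite strip on which distances are explicit, and paths lift
along the covering; hence packing colorings of `H(r)` are the colorings whose lifts satisfy a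
condition on integers.

Lower bounds: a finite search shows that four consecutive columns of the strip have no packing
4-coloring, and that in a packing 5-coloring of six consecutive columns the color of `v (i + 2)`
is the image of that of `v i` under the transposition of 4 and 5, where the two middle vertices
concerned do not both keep their colors. In a packing 5-coloring of `H(r)`, going once round
applies the transposition `r` times, so for odd `r` it fixes the colors of all middle vertices,
a contradiction.

Upper bounds: for even `r` a block of four columns using five colors is repeated; for odd `r` one
block of six columns, with a single vertex of color 6 and a single one of color 7, is inserted.
-/

namespace IsPackingColoring

variable {V : Type*} {G : SimpleGraph V} {k l : ℕ} {s : ℕ → ℕ} {c : V → ℕ}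

theorem mono (hkl : k ≤ l) (hc : IsPackingColoring G k s c) : IsPackingColoring G l s c :=
  ⟨fun v => ⟨(hc.1 v).1, (hc.1 v).2.trans hkl⟩, hc.2⟩

theorem packingChromaticNumber_le (hc : IsPackingColoring G k s c) :
    packingChromaticNumber G s ≤ k :=
  Nat.sInf_le ⟨c, hc⟩

theorem lt_packingChromaticNumber (hc : IsPackingColoring G k s c)
    (hl : ∀ c' : V → ℕ, ¬ IsPackingColoring G l s c') : l < packingChromaticNumber G s := by
  refine Nat.lt_of_succ_le (le_csInf ⟨k, c, hc⟩ ?_)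
  rintro m ⟨c', hc'⟩
  exact Nat.lt_of_not_le fun hml => hl c' (hc'.mono hml)

end IsPackingColoring

namespace HGraph

section Strip

/-- The distance on the infinite strip `Fin 3 × ℤ`, the cover of all the graphs `H(r)` with the
same rows and edges as `H(r)` but columns in `ℤ`. The middle vertices of columns `m` and `n` are
joined by an edge when `m ≠ n` and `⌊m / 2⌋ = ⌊n / 2⌋`; any other path between middle vertices
passes through an outer row, which costs two vertical edges. -/
def stripDist (x y : Fin 3 × ℤ) : ℕ :=
  if x.1 = 1 ∧ y.1 = 1 then
    if x.2 = y.2 then 0 else if x.2 / 2 = y.2 / 2 then 1 else (x.2 - y.2).natAbs + 2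
  else (x.2 - y.2).natAbs + ((x.1 : ℤ) - y.1).natAbs

theorem stripDist_self (x : Fin 3 × ℤ) : stripDist x x = 0 := by
  simp [stripDist]

theorem stripDist_comm (x y : Fin 3 × ℤ) : stripDist x y = stripDist y x := by
  grind [stripDist]

theorem stripDist_triangle (x y z : Fin 3 × ℤ) :
    stripDist x z ≤ stripDist x y + stripDist y z := by
  simp only [stripDist, Fin.ext_iff, Fin.val_one]
  split_ifs <;> omega

theorem natAbs_sub_le_stripDist (x y : Fin 3 × ℤ) : (x.2 - y.2).natAbs ≤ stripDist x y := by
  simp only [stripDist]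
  split_ifs <;> omega

theorem stripDist_add_two_mul (i j : Fin 3) (m n a : ℤ) :
    stripDist (i, m + 2 * a) (j, n + 2 * a) = stripDist (i, m) (j, n) := by
  simp only [stripDist, add_left_inj, add_sub_add_right_eq_sub,
    Int.add_mul_ediv_left _ _ two_ne_zero]

end Strip

section Projection

variable {r : ℕ}

/-- The covering map from the infinite strip onto `H(r)`. -/
def proj (r : ℕ) (x : Fin 3 × ℤ) : Fin 3 × ZMod (2 * r) := (x.1, x.2)

theorem proj_surjective (r : ℕ) : Function.Surjective (proj r) :=
  Function.surjective_id.prodMap ZMod.intCast_surjective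

theorem proj_eq_proj_iff {x y : Fin 3 × ℤ} :
    proj r x = proj r y ↔ x.1 = y.1 ∧ 2 * (r : ℤ) ∣ y.2 - x.2 := by
  simp only [proj, Prod.mk.injEq, ZMod.intCast_eq_intCast_iff_dvd_sub, Nat.cast_mul,
    Nat.cast_ofNat]

theorem proj_ne_proj {x y : Fin 3 × ℤ} (hxy : x ≠ y) (hlt : (x.2 - y.2).natAbs < 2 * r) :
    proj r x ≠ proj r y := by
  intro h
  obtain ⟨hrow, hdvd⟩ := proj_eq_proj_iff.1 h
  have hzero : y.2 - x.2 = 0 := Int.eq_zero_of_abs_lt_dvd hdvd (by rw [abs_lt]; omega)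
  exact hxy (Prod.ext hrow (by omega))

theorem ne_add_one (z : ZMod (2 * r)) : z ≠ z + 1 := by
  have : Nontrivial (ZMod (2 * r)) := ZMod.nontrivial_iff.2 (by omega)
  exact (add_ne_left.2 one_ne_zero).symm

theorem adj_row {i : Fin 3} (hi : i ≠ 1) (z : ZMod (2 * r)) :
    (HGraph r).Adj (i, z) (i, z + 1) := by
  have hrow : i = 0 ∨ i = 2 := by omega
  exact (SimpleGraph.fromRel_adj _ _ _).2
    ⟨fun h => ne_add_one z (Prod.ext_iff.1 h).2, .inl (.inl ⟨by simpa using hrow, rfl⟩)⟩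

theorem adj_middle {i : Fin 3} (hi : i ≠ 1) (z : ZMod (2 * r)) :
    (HGraph r).Adj (i, z) (1, z) := by
  obtain rfl | rfl : i = 0 ∨ i = 2 := by omega
  all_goals simp [HGraph]

theorem adj_pair (z : ZMod (2 * r)) : (HGraph r).Adj (1, 2 * z) (1, 2 * z + 1) :=
  (SimpleGraph.fromRel_adj _ _ _).2
    ⟨fun h => ne_add_one _ (Prod.ext_iff.1 h).2, .inl (.inr (.inr ⟨rfl, rfl, z, rfl, rfl⟩))⟩

theorem edist_row_le {i : Fin 3} (hi : i ≠ 1) (z : ZMod (2 * r)) (d : ℕ) :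
    (HGraph r).edist (i, z) (i, z + d) ≤ d := by
  induction d with
  | zero => simp
  | succ d ih =>
    have hstep := SimpleGraph.edist_eq_one_iff_adj.2 (adj_row hi (z + (d : ZMod (2 * r))))
    rw [Nat.cast_succ, Nat.cast_succ, ← add_assoc]
    exact SimpleGraph.edist_triangle.trans (add_le_add ih hstep.le)

theorem edist_proj_row_le {i : Fin 3} (hi : i ≠ 1) (m n : ℤ) :
    (HGraph r).edist (proj r (i, m)) (proj r (i, n)) ≤ (m - n).natAbs := by
  wlog hmn : m ≤ n generalizing m n
  · rw [SimpleGraph.edist_comm, ← Int.natAbs_neg, neg_sub]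
    exact this n m (by omega)
  obtain ⟨d, rfl⟩ := Int.le.dest hmn
  simpa [proj] using edist_row_le hi (m : ZMod (2 * r)) d

theorem edist_column_le (i j : Fin 3) (z : ZMod (2 * r)) :
    (HGraph r).edist (i, z) (j, z) ≤ ((i : ℤ) - j).natAbs := by
  have hmiddle {i : Fin 3} (hi : i ≠ 1) := SimpleGraph.edist_eq_one_iff_adj.2 (adj_middle hi z)
  have houter : (HGraph r).edist (0, z) (2, z) ≤ 2 := by
    refine (SimpleGraph.edist_triangle (v := (1, z))).trans ?_
    rw [hmiddle (by decide), SimpleGraph.edist_comm, hmiddle (by decide), one_add_one_eq_two]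
  fin_cases i <;> fin_cases j
  all_goals simp [hmiddle, houter, SimpleGraph.edist_comm (u := ((1 : Fin 3), z)),
    SimpleGraph.edist_comm (u := ((2 : Fin 3), z)) (v := (0, z))]

theorem edist_proj_le_of_ne_one {i : Fin 3} (hi : i ≠ 1) (j : Fin 3) (m n : ℤ) :
    (HGraph r).edist (proj r (i, m)) (proj r (j, n)) ≤
      ((m - n).natAbs + ((i : ℤ) - j).natAbs : ℕ) := by
  rw [Nat.cast_add]
  exact SimpleGraph.edist_triangle.trans
    (add_le_add (edist_proj_row_le hi m n) (edist_column_le i j n))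

theorem edist_proj_pair_le {m n : ℤ} (hmn : m / 2 = n / 2) :
    (HGraph r).edist (proj r (1, m)) (proj r (1, n)) ≤ 1 := by
  wlog hle : m ≤ n generalizing m n
  · rw [SimpleGraph.edist_comm]
    exact this hmn.symm (by omega)
  rcases hle.eq_or_lt with rfl | hlt
  · simp
  obtain ⟨k, rfl, rfl⟩ : ∃ k, m = 2 * k ∧ n = 2 * k + 1 := ⟨m / 2, by omega⟩
  simpa [proj] using (SimpleGraph.edist_eq_one_iff_adj.2 (adj_pair (k : ZMod (2 * r)))).le

theorem edist_proj_le (x y : Fin 3 × ℤ) :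
    (HGraph r).edist (proj r x) (proj r y) ≤ stripDist x y := by
  obtain ⟨i, m⟩ := x
  obtain ⟨j, n⟩ := y
  by_cases hi : i = 1
  · by_cases hj : j = 1
    · subst hi hj
      simp only [stripDist, and_self, if_true]
      split_ifs with heq hpair
      · simp [heq]
      · exact edist_proj_pair_le hpair
      · calc (HGraph r).edist (proj r (1, m)) (proj r (1, n))
          _ ≤ (HGraph r).edist (proj r (1, m)) (proj r (0, m)) +
              (HGraph r).edist (proj r (0, m)) (proj r (1, n)) := SimpleGraph.edist_triangle
          _ ≤ 1 + ((m - n).natAbs + 1 : ℕ) :=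
            add_le_add (edist_column_le 1 0 _) (edist_proj_le_of_ne_one zero_ne_one 1 m n)
          _ = ((m - n).natAbs + 2 : ℕ) := by norm_cast; omega
    · rw [SimpleGraph.edist_comm, stripDist_comm, stripDist, if_neg fun h => hj h.1]
      exact edist_proj_le_of_ne_one hj i n m
  · rw [stripDist, if_neg fun h => hi h.1]
    exact edist_proj_le_of_ne_one hi j m n

theorem reachable (u v : Fin 3 × ZMod (2 * r)) : (HGraph r).Reachable u v := by
  obtain ⟨x, rfl⟩ := proj_surjective r u
  obtain ⟨y, rfl⟩ := proj_surjective r v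
  exact SimpleGraph.edist_ne_top_iff_reachable.1
    (ne_top_of_le_ne_top (ENat.natCast_ne_top _) (edist_proj_le x y))

theorem dist_proj_le (x y : Fin 3 × ℤ) :
    (HGraph r).dist (proj r x) (proj r y) ≤ stripDist x y := by
  rw [← Nat.cast_le (α := ℕ∞), (reachable _ _).coe_dist_eq_edist]
  exact edist_proj_le x y

theorem even_of_intCast_eq_two_mul {m : ℤ} {z : ZMod (2 * r)} (h : (m : ZMod (2 * r)) = 2 * z) :
    Even m := by
  obtain ⟨k, rfl⟩ := ZMod.intCast_surjective z
  have hdvd : ((2 * r : ℕ) : ℤ) ∣ 2 * k - m := by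
    rw [← ZMod.intCast_eq_intCast_iff_dvd_sub]
    exact_mod_cast h
  have htwo : (2 : ℤ) ∣ 2 * k - m := dvd_trans ⟨r, by push_cast; rfl⟩ hdvd
  exact even_iff_two_dvd.2 ((dvd_sub_right (dvd_mul_right 2 k)).1 htwo)

theorem exists_proj_eq_of_adj (x : Fin 3 × ℤ) {v : Fin 3 × ZMod (2 * r)}
    (h : (HGraph r).Adj (proj r x) v) : ∃ y, proj r y = v ∧ stripDist x y = 1 := by
  obtain ⟨i, m⟩ := x
  obtain ⟨j, z⟩ := v
  simp only [HGraph, SimpleGraph.fromRel_adj, proj] at h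
  rcases h.2 with (⟨hij, hz⟩ | ⟨hij, hz⟩ | ⟨rfl, rfl, k, hm, hz⟩) |
    (⟨hij, hm⟩ | ⟨hij, hz⟩ | ⟨rfl, rfl, k, hz, hm⟩)
  · refine ⟨(i, m + 1), ?_, ?_⟩
    · obtain ⟨rfl, rfl⟩ | ⟨rfl, rfl⟩ := hij <;> simp [proj, hz]
    · grind [stripDist]
  · refine ⟨(j, m), ?_, ?_⟩
    · simp [proj, hz]
    · obtain ⟨rfl, rfl⟩ | ⟨rfl, rfl⟩ := hij <;> simp [stripDist]
  · obtain ⟨a, rfl⟩ := even_of_intCast_eq_two_mul hm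
    refine ⟨(1, a + a + 1), ?_, ?_⟩
    · rw [hz, ← hm]; simp [proj]
    · grind [stripDist]
  · refine ⟨(i, m - 1), ?_, ?_⟩
    · obtain ⟨rfl, rfl⟩ | ⟨rfl, rfl⟩ := hij <;> simp [proj, hm]
    · grind [stripDist]
  · refine ⟨(j, m), ?_, ?_⟩
    · simp [proj, hz]
    · obtain ⟨rfl, rfl⟩ | ⟨rfl, rfl⟩ := hij <;> simp [stripDist]
  · obtain ⟨a, ha⟩ := even_of_intCast_eq_two_mul (r := r) (m := m - 1) (z := k) (by simp [hm])
    refine ⟨(1, m - 1), ?_, ?_⟩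
    · rw [hz]; simp [proj, hm]
    · grind [stripDist]

theorem exists_proj_eq_of_walk {u v : Fin 3 × ZMod (2 * r)} (p : (HGraph r).Walk u v)
    (x : Fin 3 × ℤ) (hx : proj r x = u) : ∃ y, proj r y = v ∧ stripDist x y ≤ p.length := by
  induction p generalizing x with
  | nil => exact ⟨x, hx, (stripDist_self x).le⟩
  | cons h p ih =>
    obtain ⟨z, hz, hxz⟩ := exists_proj_eq_of_adj x (hx ▸ h)
    obtain ⟨y, hy, hzy⟩ := ih z hz
    refine ⟨y, hy, (stripDist_triangle x z y).trans ?_⟩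
    rw [hxz, SimpleGraph.Walk.length_cons, add_comm]
    exact Nat.add_le_add_right hzy 1

theorem isPackingColoring_iff {k : ℕ} {s : ℕ → ℕ} {c : Fin 3 × ZMod (2 * r) → ℕ} :
    IsPackingColoring (HGraph r) k s c ↔ (∀ v, 1 ≤ c v ∧ c v ≤ k) ∧
      ∀ x y, proj r x ≠ proj r y → c (proj r x) = c (proj r y) →
        s (c (proj r x)) < stripDist x y := by
  refine and_congr_right fun _ => ⟨fun hc x y hne heq => ?_, fun hc u v hne heq => ?_⟩
  · exact (hc _ _ hne heq).trans_le (dist_proj_le x y)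
  · obtain ⟨x, rfl⟩ := proj_surjective r u
    obtain ⟨p, hp⟩ := (reachable (proj r x) v).exists_walk_length_eq_dist
    obtain ⟨y, rfl, hxy⟩ := exists_proj_eq_of_walk p x rfl
    exact (hc x y hne heq).trans_le (hp ▸ hxy)

end Projection

section LowerBounds

/-- `EveryExtension d s k Q vs l`: every way of extending the partial coloring `l` by colors
`1, …, k` on the vertices `vs`, taken in order, such that equal colors `i` on `u` and a later `v`
satisfy `s i < d u v`, leads to a list of colors with property `Q`. The list `l` has the most
recently colored vertex first, and `Q` sees the colors in the order of coloring. Unfolding from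
`l = []` is a backtracking search over all packing colorings of `vs`. -/
def EveryExtension {V : Type*} (d : V → V → ℕ) (s : ℕ → ℕ) (k : ℕ) (Q : List ℕ → Prop) :
    List V → List (V × ℕ) → Prop
  | [], l => Q (l.map Prod.snd).reverse
  | v :: vs, l => ∀ c ≤ k, 1 ≤ c → (∀ p ∈ l, p.2 = c → s c < d p.1 v) →
      EveryExtension d s k Q vs ((v, c) :: l)

instance EveryExtension.instDecidable {V : Type*} (d : V → V → ℕ) (s : ℕ → ℕ) (k : ℕ)
    (Q : List ℕ → Prop) [DecidablePred Q] :
    ∀ vs l, Decidable (EveryExtension d s k Q vs l)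
  | [], l => inferInstanceAs (Decidable (Q (l.map Prod.snd).reverse))
  | v :: vs, l =>
    have := EveryExtension.instDecidable d s k Q vs
    inferInstanceAs (Decidable (∀ c ≤ k, 1 ≤ c → (∀ p ∈ l, p.2 = c → s c < d p.1 v) →
      EveryExtension d s k Q vs ((v, c) :: l)))

theorem EveryExtension.apply {V : Type*} {d : V → V → ℕ} {s : ℕ → ℕ} {k : ℕ} {Q : List ℕ → Prop}
    {f : V → ℕ} {us vs : List V} (hrange : ∀ v ∈ vs, 1 ≤ f v ∧ f v ≤ k)
    (hdist : (us.reverse ++ vs).Pairwise fun u v => f u = f v → s (f v) < d u v)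
    (h : EveryExtension d s k Q vs (us.map fun u => (u, f u))) :
    Q ((us.reverse ++ vs).map f) := by
  induction vs generalizing us with
  | nil => simpa [EveryExtension, Function.comp_def] using h
  | cons v vs ih =>
    have hsplit : us.reverse ++ v :: vs = (v :: us).reverse ++ vs := by simp
    have hfits : ∀ p ∈ us.map fun u => (u, f u), p.2 = f v → s (f v) < d p.1 v := by
      simp only [List.mem_map, forall_exists_index, and_imp, forall_apply_eq_imp_iff₂]
      exact fun u hu => (List.pairwise_append.1 hdist).2.2 u (List.mem_reverse.2 hu) v
        List.mem_cons_self
    obtain ⟨hpos, hle⟩ := hrange v List.mem_cons_self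
    rw [hsplit] at hdist ⊢
    exact ih (fun w hw => hrange w (List.mem_cons_of_mem v hw)) hdist (h (f v) hle hpos hfits)

/-- The vertices of the columns `0, …, n - 1` of the infinite strip, column by column, so that the
middle vertex of column `m` has index `3 * m + 1`. -/
def window (n : ℕ) : List (Fin 3 × ℤ) :=
  (List.range n).flatMap fun m : ℕ => [(0, (m : ℤ)), (1, (m : ℤ)), (2, (m : ℤ))]

theorem column_mem_of_mem_window {n : ℕ} {x : Fin 3 × ℤ} (hx : x ∈ window n) :
    0 ≤ x.2 ∧ x.2 < n := by
  simp only [window, List.mem_flatMap, List.mem_range, List.mem_cons, List.not_mem_nil,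
    or_false] at hx
  obtain ⟨m, hm, rfl | rfl | rfl⟩ := hx <;> simpa using hm

theorem nodup_window (n : ℕ) : (window n).Nodup := by
  refine List.nodup_flatMap.2 ⟨fun m _ => by simp, List.nodup_range.imp fun hne => ?_⟩
  simpa [Function.onFun, eq_comm] using hne

theorem property_of_everyExtension_window {r k n : ℕ} {s : ℕ → ℕ} {c : Fin 3 × ZMod (2 * r) → ℕ}
    {Q : List ℕ → Prop} (hc : IsPackingColoring (HGraph r) k s c) (hn : n ≤ 2 * r)
    (h : EveryExtension stripDist s k Q (window n) []) (a : ℤ) :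
    Q ((window n).map fun x => c (proj r (x.1, x.2 + 2 * a))) := by
  refine EveryExtension.apply (us := []) (fun _ _ => hc.1 _) ?_ h
  refine (nodup_window n).imp_of_mem fun {x y} hx hy hne heq => ?_
  have hx' := column_mem_of_mem_window hx
  have hy' := column_mem_of_mem_window hy
  rw [← heq, ← stripDist_add_two_mul _ _ _ _ a]
  refine (isPackingColoring_iff.1 hc).2 _ _ (proj_ne_proj ?_ ?_) heq
  · simpa [Prod.ext_iff] using hne
  · simp only; omega

theorem everyExtension_four_window :
    EveryExtension stripDist (fun i => i) 4 (fun _ => False) (window 4) [] := by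
  decide +kernel

theorem not_isPackingColoring_four {r : ℕ} (hr : 2 ≤ r) (c : Fin 3 × ZMod (2 * r) → ℕ) :
    ¬ IsPackingColoring (HGraph r) 4 (fun i => i) c := fun hc =>
  property_of_everyExtension_window hc (by omega) everyExtension_four_window 0

theorem everyExtension_five_window :
    EveryExtension stripDist (fun i => i) 5
      (fun l => l.getD 10 0 = Equiv.swap 4 5 (l.getD 4 0) ∧
        l.getD 13 0 = Equiv.swap 4 5 (l.getD 7 0) ∧
        (l.getD 10 0 ≠ l.getD 4 0 ∨ l.getD 13 0 ≠ l.getD 7 0))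
      (window 6) [] := by
  decide +kernel

section FiveColoring

variable {r : ℕ} {c : Fin 3 × ZMod (2 * r) → ℕ}

theorem middle_color_of_isPackingColoring_five (hr : 3 ≤ r)
    (hc : IsPackingColoring (HGraph r) 5 (fun i => i) c) (a : ℤ) :
    c (proj r (1, 2 * a + 3)) = Equiv.swap 4 5 (c (proj r (1, 2 * a + 1))) ∧
    c (proj r (1, 2 * a + 4)) = Equiv.swap 4 5 (c (proj r (1, 2 * a + 2))) ∧
    (c (proj r (1, 2 * a + 3)) ≠ c (proj r (1, 2 * a + 1)) ∨
      c (proj r (1, 2 * a + 4)) ≠ c (proj r (1, 2 * a + 2))) := by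
  have h := property_of_everyExtension_window hc (by omega) everyExtension_five_window a
  simpa [window, List.range_succ, add_comm] using h

theorem middle_color_add_two (hr : 3 ≤ r) (hc : IsPackingColoring (HGraph r) 5 (fun i => i) c)
    (n : ℤ) : c (proj r (1, n + 2)) = Equiv.swap 4 5 (c (proj r (1, n))) := by
  obtain ⟨a, rfl | rfl⟩ := Int.even_or_odd' n
  · convert (middle_color_of_isPackingColoring_five hr hc (a - 1)).2.1 using 4 <;> ring_nf
  · convert (middle_color_of_isPackingColoring_five hr hc a).1 using 4; ring

theorem middle_color_add_two_mul (hr : 3 ≤ r)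
    (hc : IsPackingColoring (HGraph r) 5 (fun i => i) c) (n : ℤ) (m : ℕ) :
    c (proj r (1, n + 2 * m)) = (Equiv.swap 4 5)^[m] (c (proj r (1, n))) := by
  induction m with
  | zero => simp
  | succ m ih =>
    rw [Function.iterate_succ_apply', ← ih, ← middle_color_add_two hr hc, Nat.cast_succ, mul_add,
      mul_one, add_assoc]

theorem not_isPackingColoring_five (hr : 3 ≤ r) (hodd : Odd r) (c : Fin 3 × ZMod (2 * r) → ℕ) :
    ¬ IsPackingColoring (HGraph r) 5 (fun i => i) c := by
  intro hc
  have hfixed (n : ℤ) : c (proj r (1, n + 2)) = c (proj r (1, n)) := by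
    have hperiod : proj r (1, n + 2 * r) = proj r (1, n) := by simp [proj_eq_proj_iff]
    rw [middle_color_add_two hr hc,
      ← Function.Involutive.iterate_odd (Equiv.swap_apply_self 4 5) hodd,
      ← middle_color_add_two_mul hr hc, hperiod]
  exact (middle_color_of_isPackingColoring_five hr hc 0).2.2.elim
    (fun h => h (hfixed 1)) (fun h => h (hfixed 2))

end FiveColoring

end LowerBounds

section UpperBounds

/-- The colors of the ten kinds of columns from which the colorings are assembled. Columns `0`–`3`
form a block using the colors `1, …, 5` only, which may be repeated; columns `4`–`9` form a block
of length six which may be inserted once, because it contains one vertex of color `6` and one of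
color `7`. -/
def columnColor : Fin 10 → Fin 3 → ℕ :=
  ![![1, 4, 1], ![2, 1, 3], ![1, 5, 1], ![3, 1, 2],
    ![1, 4, 1], ![2, 1, 3], ![6, 1, 2], ![1, 4, 1], ![2, 5, 7], ![3, 1, 2]]

/-- The kinds of columns that may follow a given one: the next one of the same block or, at the end
of a block, the first one of either block. -/
def nextColumns (l : Fin 10) : List (Fin 10) :=
  if l = 3 ∨ l = 9 then [0, 4] else [l + 1]

/-- The kinds of columns that may occur `d` columns to the right of a given one. -/
def columnsAfter : ℕ → Fin 10 → List (Fin 10)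
  | 0, l => [l]
  | d + 1, l => (columnsAfter d l).flatMap nextColumns

theorem one_le_columnColor : ∀ l i, 1 ≤ columnColor l i := by decide

theorem columnColor_le_seven : ∀ l i, columnColor l i ≤ 7 := by decide

theorem columnColor_le_five : ∀ l < 4, ∀ i, columnColor l i ≤ 5 := by decide

theorem eq_of_columnColor_eq_of_five_lt : ∀ l i l' i', 5 < columnColor l i →
    columnColor l i = columnColor l' i' → l = l' ∧ i = i' := by decide +kernel

theorem columnColor_lt_stripDist_of_mem_columnsAfter : ∀ d < 6, ∀ l i, columnColor l i ≤ 5 →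
    ∀ l' ∈ columnsAfter d l, ∀ j, columnColor l i = columnColor l' j → d ≠ 0 ∨ i ≠ j →
      columnColor l i < stripDist (i, (l : ℕ)) (j, (l : ℕ) + d) := by
  intro d hd
  interval_cases d <;> decide +kernel

theorem mem_columnsAfter {F : ℤ → Fin 10} (hstep : ∀ n, F (n + 1) ∈ nextColumns (F n)) (n : ℤ)
    (d : ℕ) : F (n + d) ∈ columnsAfter d (F n) := by
  induction d with
  | zero => simp [columnsAfter]
  | succ d ih =>
    rw [Nat.cast_succ, ← add_assoc]
    exact List.mem_flatMap.2 ⟨_, ih, hstep _⟩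

theorem columnColor_lt_stripDist {F : ℤ → Fin 10} (hstep : ∀ n, F (n + 1) ∈ nextColumns (F n))
    (hparity : ∀ n, ((F n : ℕ) : ℤ) % 2 = n % 2) {x y : Fin 3 × ℤ} (hxy : x ≠ y)
    (hle : columnColor (F x.2) x.1 ≤ 5)
    (heq : columnColor (F x.2) x.1 = columnColor (F y.2) y.1) :
    columnColor (F x.2) x.1 < stripDist x y := by
  wlog hcol : x.2 ≤ y.2 generalizing x y
  · rw [heq, stripDist_comm]
    exact this hxy.symm (heq ▸ hle) heq.symm (by omega)
  obtain ⟨i, n⟩ := x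
  obtain ⟨j, m⟩ := y
  obtain ⟨d, rfl⟩ := Int.le.dest hcol
  by_cases hd : d < 6
  · obtain ⟨a, ha⟩ : ∃ a : ℤ, n = (F n : ℕ) + 2 * a :=
      ⟨(n - (F n : ℕ)) / 2, by have := hparity n; omega⟩
    have hshift : stripDist (i, n) (j, n + d) = stripDist (i, (F n : ℕ)) (j, (F n : ℕ) + d) := by
      rw [← stripDist_add_two_mul i j (F n : ℕ) _ a, add_right_comm, ← ha]
    rw [hshift]
    refine columnColor_lt_stripDist_of_mem_columnsAfter d hd _ i hle _ (mem_columnsAfter hstep n d)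
      j heq ?_
    contrapose! hxy
    simp [hxy]
  · have := natAbs_sub_le_stripDist (i, n) (j, n + d)
    simp only at this hle ⊢
    omega

theorem mem_nextColumns_iff : ∀ {l l' : Fin 10}, l' ∈ nextColumns l ↔
    if l.val = 3 ∨ l.val = 9 then l'.val = 0 ∨ l'.val = 4 else l'.val = l.val + 1 := by
  decide

theorem isPackingColoring_of_columns {r k : ℕ} [NeZero (2 * r)] {f : ℕ → Fin 10}
    (hrange : ∀ n i, columnColor (f n) i ≤ k)
    (hstep : ∀ n, n + 1 < 2 * r → f (n + 1) ∈ nextColumns (f n))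
    (hwrap : f 0 ∈ nextColumns (f (2 * r - 1)))
    (hparity : ∀ n < 2 * r, (f n : ℕ) % 2 = n % 2)
    (hinj : ∀ n < 2 * r, ∀ m < 2 * r, 4 ≤ f n → f n = f m → n = m) :
    IsPackingColoring (HGraph r) k (fun i => i) fun v => columnColor (f v.2.val) v.1 := by
  refine isPackingColoring_iff.2 ⟨fun v => ⟨one_le_columnColor _ _, hrange _ _⟩, ?_⟩
  intro x y hne heq
  by_cases hle : columnColor (f (x.2 : ZMod (2 * r)).val) x.1 ≤ 5
  · refine columnColor_lt_stripDist (F := fun n => f (n : ZMod (2 * r)).val) ?_ ?_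
      (ne_of_apply_ne _ hne) hle heq
    · intro n
      have hsucc : ((n + 1 : ℤ) : ZMod (2 * r)).val = ((n : ZMod (2 * r)).val + 1) % (2 * r) := by
        rw [← ZMod.val_natCast]; simp
      have hlt := ZMod.val_lt (n : ZMod (2 * r))
      rcases (Nat.succ_le_of_lt hlt).lt_or_eq with hlast | hlast
      · rw [hsucc, Nat.mod_eq_of_lt hlast]
        exact hstep _ hlast
      · rw [hsucc, ← Nat.succ_eq_add_one, hlast, Nat.mod_self, Nat.eq_sub_of_add_eq (b := 1) hlast]
        exact hwrap
    · intro n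
      have hval : ((n : ZMod (2 * r)).val : ℤ) % 2 = n % 2 := by
        rw [ZMod.val_intCast]
        exact Int.emod_emod_of_dvd _ ⟨r, by push_cast; rfl⟩
      have := hparity _ (ZMod.val_lt (n : ZMod (2 * r)))
      omega
  · obtain ⟨hkind, hrow⟩ := eq_of_columnColor_eq_of_five_lt _ _ _ _ (not_le.1 hle) heq
    have hblock : 4 ≤ f (x.2 : ZMod (2 * r)).val :=
      not_lt.1 fun hlt => hle (columnColor_le_five _ hlt _)
    have hval := hinj _ (ZMod.val_lt _) _ (ZMod.val_lt _) hblock hkind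
    exact (hne (Prod.ext hrow (ZMod.val_injective _ hval))).elim

theorem exists_isPackingColoring_five {r : ℕ} (hr : 0 < r) (heven : Even r) :
    ∃ c, IsPackingColoring (HGraph r) 5 (fun i => i) c := by
  have : NeZero (2 * r) := ⟨by omega⟩
  obtain ⟨k, rfl⟩ := heven
  have hlt (n : ℕ) : n % 4 < 10 := by omega
  refine ⟨_, isPackingColoring_of_columns (f := fun n => ⟨n % 4, hlt n⟩)
    (fun n i => columnColor_le_five _ ?_ i) (fun n _ => ?_) ?_ (fun n _ => ?_)
    fun n _ m _ hblock => ?_⟩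
  all_goals simp only [mem_nextColumns_iff, Fin.lt_def, Fin.le_def] at *
  all_goals grind

theorem exists_isPackingColoring_seven {r : ℕ} (hr : 3 ≤ r) (hodd : Odd r) :
    ∃ c, IsPackingColoring (HGraph r) 7 (fun i => i) c := by
  have : NeZero (2 * r) := ⟨by omega⟩
  obtain ⟨k, rfl⟩ := hodd
  have hlt (n : ℕ) : (if n < 6 then n + 4 else (n + 2) % 4) < 10 := by split_ifs <;> omega
  refine ⟨_, isPackingColoring_of_columns (f := fun n => ⟨_, hlt n⟩)
    (fun n i => columnColor_le_seven _ i) (fun n _ => ?_) ?_ (fun n _ => ?_)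
    fun n _ m _ hblock heq => ?_⟩
  all_goals simp only [mem_nextColumns_iff, Fin.le_def, Fin.mk.injEq] at *
  all_goals grind

end UpperBounds

end HGraph

/-- `χ_ρ(H(r)) = 5` for even `r ≥ 2`, and `6 ≤ χ_ρ(H(r)) ≤ 7` for odd `r ≥ 3`. -/
theorem packing_chromatic_H_graph_bounds :
    (∀ r : ℕ, 2 ≤ r → Even r →
      packingChromaticNumber (HGraph r) (fun i => i) = 5) ∧
    (∀ r : ℕ, 3 ≤ r → Odd r →
      6 ≤ packingChromaticNumber (HGraph r) (fun i => i) ∧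
      packingChromaticNumber (HGraph r) (fun i => i) ≤ 7) := by
  refine ⟨fun r hr heven => ?_, fun r hr hodd => ?_⟩
  · obtain ⟨c, hc⟩ := HGraph.exists_isPackingColoring_five (by omega) heven
    exact le_antisymm hc.packingChromaticNumber_le
      (hc.lt_packingChromaticNumber (HGraph.not_isPackingColoring_four hr))
  · obtain ⟨c, hc⟩ := HGraph.exists_isPackingColoring_seven hr hodd
    exact ⟨hc.lt_packingChromaticNumber (HGraph.not_isPackingColoring_five hr hodd),
      hc.packingChromaticNumber_le⟩
end

section
/- Let r ≥ 4 be an integer. The H-graph H(r) admits a packing 6-coloring if and only if the digraph D contains a closed directed walk of length r − 2. -/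
/-- `H_P(r)`: the graph obtained from `H(r)` by removing the edges `u_0 u_{2r-1}` and
`w_0 w_{2r-1}` (so the two horizontal rows become paths); columns indexed by `Fin (2r)`. -/
def HPGraph (r : ℕ) : SimpleGraph (Fin 3 × Fin (2 * r)) :=
  SimpleGraph.fromRel fun x y =>
    ((x.1 = 0 ∧ y.1 = 0 ∨ x.1 = 2 ∧ y.1 = 2) ∧ (y.2 : ℕ) = (x.2 : ℕ) + 1) ∨
    ((x.1 = 0 ∧ y.1 = 1 ∨ x.1 = 1 ∧ y.1 = 2) ∧ x.2 = y.2) ∨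
    (x.1 = 1 ∧ y.1 = 1 ∧ (y.2 : ℕ) = (x.2 : ℕ) + 1 ∧ Even (x.2 : ℕ))

/-- Given 6-colorings `f`, `g` of `H_P(3)`, the coloring `f_g` of `H_P(4)` whose
restriction to columns `0,1,2` is `f` and whose restriction to column `3` is `g`
on column `2` (column `i` consists of the vertex indices `2i` and `2i+1`). -/
def glueColoring (f g : Fin 3 × Fin (2 * 3) → ℕ) : Fin 3 × Fin (2 * 4) → ℕ :=
  fun x =>
    if h : (x.2 : ℕ) < 2 * 3 then f (x.1, ⟨(x.2 : ℕ), h⟩)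
    else g (x.1, ⟨(x.2 : ℕ) - 2, by have := x.2.isLt; omega⟩)

/-- The arc relation of the digraph `D` on packing 6-colorings of `H_P(3)`:
there is an arc from `f` to `g` iff (i) `f` on columns `1,2` agrees with `g` on
columns `0,1` (a shift by one column, i.e. two indices), and (ii) the glued
coloring `f_g` is a packing 6-coloring of `H_P(4)`. -/
def DArc (f g : Fin 3 × Fin (2 * 3) → ℕ) : Prop :=
  (∀ a : Fin 3, ∀ t : Fin (2 * 3), 2 ≤ (t : ℕ) →
    f (a, t) = g (a, ⟨(t : ℕ) - 2, by have := t.isLt; omega⟩)) ∧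
  IsPackingColoring (HPGraph 4) 6 (fun i => i) (glueColoring f g)

/-! The infinite strip covers `H(r)`, two vertices of the same fiber being at distance at least
`2r > 6`; hence packing 6-colorings of `H(r)` are packing 6-colorings of the strip that are periodic
under translation by `r` columns. On the other hand, vertices of the strip at distance at most 6 lie
in four consecutive columns, so the colorings along a closed walk of length `n` in the digraph glue
to a packing 6-coloring of the strip with period `n` columns, and every such coloring arises so.

Both kinds of periodic coloring exist exactly for even periods, and `r` and `r - 2` have the same
parity. There is a coloring with period two columns. Conversely, the colors 2 and 3 single out one
outer row in each column of a packing 6-coloring, and the chosen rows alternate from column to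
column. The local facts behind this are checked by a backtracking search on a piece of the strip.
-/

section General

variable {V W : Type*} {G : SimpleGraph V} {G' : SimpleGraph W}

theorem exists_walk_length_le_of_descent {d : V → ℕ} {y : V}
    (hdesc : ∀ x ≠ y, ∃ x', G.Adj x x' ∧ d x' < d x) (x : V) :
    ∃ p : G.Walk x y, p.length ≤ d x := by
  induction hn : d x using Nat.strong_induction_on generalizing x with
  | _ n ih =>
    subst hn
    rcases eq_or_ne x y with rfl | hxy
    · exact ⟨.nil, Nat.zero_le _⟩
    · obtain ⟨x', hadj, hlt⟩ := hdesc x hxy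
      obtain ⟨p, hp⟩ := ih _ hlt x' rfl
      exact ⟨.cons hadj p, by rw [SimpleGraph.Walk.length_cons]; omega⟩

theorem le_add_length_of_adj {d : V → ℕ} (hadj : ∀ ⦃u v⦄, G.Adj u v → d u ≤ d v + 1)
    {x y : V} (p : G.Walk x y) : d x ≤ d y + p.length := by
  induction p with
  | nil => simp
  | cons h p ih =>
    have := hadj h
    rw [SimpleGraph.Walk.length_cons]
    omega

theorem preconnected_of_descent {d : V → V → ℕ}
    (hdesc : ∀ x y, x ≠ y → ∃ x', G.Adj x x' ∧ d x' y < d x y) : G.Preconnected :=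
  fun x y => (exists_walk_length_le_of_descent (hdesc · y) x).nonempty

theorem dist_eq_of_descent {d : V → V → ℕ} (hself : ∀ x, d x x = 0)
    (hadj : ∀ ⦃u v⦄, G.Adj u v → ∀ y, d u y ≤ d v y + 1)
    (hdesc : ∀ x y, x ≠ y → ∃ x', G.Adj x x' ∧ d x' y < d x y) (x y : V) :
    G.dist x y = d x y := by
  obtain ⟨p, hp⟩ := exists_walk_length_le_of_descent (hdesc · y) x
  obtain ⟨q, hq⟩ := p.reachable.exists_walk_length_eq_dist
  have hlower := le_add_length_of_adj (fun u v h => hadj h y) q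
  have hupper := SimpleGraph.dist_le p
  rw [hself] at hlower
  omega

theorem IsPackingColoring.comp {k : ℕ} {s : ℕ → ℕ} {c : W → ℕ}
    (hc : IsPackingColoring G' k s c) {φ : V → W}
    (hdist : ∀ x y, G'.dist (φ x) (φ y) ≤ G.dist x y)
    (hcoll : ∀ x y, x ≠ y → φ x = φ y → s (c (φ x)) < G.dist x y) :
    IsPackingColoring G k s (c ∘ φ) := by
  refine ⟨fun x => hc.1 (φ x), fun x y hxy hcol => ?_⟩
  by_cases h : φ x = φ y
  · exact hcoll x y hxy h
  · exact (hc.2 _ _ h hcol).trans_le (hdist x y)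

theorem exists_lift_of_walk {φ : V → W}
    (hlift : ∀ x y', G'.Adj (φ x) y' → ∃ y, G.Adj x y ∧ φ y = y')
    {x' y' : W} (p : G'.Walk x' y') :
    ∀ x, φ x = x' → ∃ y, φ y = y' ∧ ∃ q : G.Walk x y, q.length = p.length := by
  induction p with
  | nil => exact fun x hx => ⟨x, hx, .nil, rfl⟩
  | cons h p ih =>
    rintro x rfl
    obtain ⟨z, hxz, hz⟩ := hlift x _ h
    obtain ⟨y, hy, q, hq⟩ := ih z hz
    exact ⟨y, hy, .cons hxz q, by simp [hq]⟩

theorem IsPackingColoring.of_comp {k : ℕ} {s : ℕ → ℕ} {c : W → ℕ} {φ : V → W}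
    (hc : IsPackingColoring G k s (c ∘ φ)) (hφ : Function.Surjective φ)
    (hlift : ∀ x y', G'.Adj (φ x) y' → ∃ y, G.Adj x y ∧ φ y = y') (hG' : G'.Preconnected) :
    IsPackingColoring G' k s c := by
  refine ⟨hφ.forall.mpr hc.1, hφ.forall.mpr fun x y' hxy hcol => ?_⟩
  obtain ⟨p, hp⟩ := (hG' (φ x) y').exists_walk_length_eq_dist
  obtain ⟨y, rfl, q, hq⟩ := exists_lift_of_walk hlift p x rfl
  calc s (c (φ x)) < G.dist x y := hc.2 x y (ne_of_apply_ne φ hxy) hcol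
    _ ≤ q.length := SimpleGraph.dist_le q
    _ = G'.dist (φ x) (φ y) := hq.trans hp

end General

theorem exists_periodic_chain_of_closed {α : Type*} {R : α → α → Prop} {n : ℕ} (hn : 1 ≤ n)
    {w : ℕ → α} (hw : ∀ i < n, R (w i) (w (i + 1))) (hclosed : w n = w 0) :
    ∃ W : ℤ → α, (∀ k, R (W k) (W (k + 1))) ∧ ∀ k, W (k + n) = W k := by
  refine ⟨fun k => w (k % n).toNat, fun k => ?_, fun k => by simp only [Int.add_emod_right]⟩
  dsimp only
  have hlo := Int.emod_nonneg k (b := n) (by omega)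
  have hhi := Int.emod_lt_of_pos k (b := n) (by omega)
  have hmod : (k + 1) % n = (k % n + 1) % n := (Int.emod_add_emod k n 1).symm
  have harc := hw (k % n).toNat (by omega)
  rcases (show k % n + 1 ≤ n by omega).lt_or_eq with h | h
  · rw [Int.emod_eq_of_lt (by omega) h] at hmod
    rwa [show ((k + 1) % n).toNat = (k % n).toNat + 1 by omega]
  · rw [h, Int.emod_self] at hmod
    rwa [show (k % n).toNat + 1 = n by omega, hclosed, ← Int.toNat_zero, ← hmod] at harc

theorem even_of_alternating {P : ℤ → Prop} (halt : ∀ k, P (k + 1) ↔ ¬P k) {n : ℕ}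
    (hn : P n ↔ P 0) : Even n := by
  have key (m : ℕ) : P m ↔ (P 0 ↔ Even m) := by
    induction m with
    | zero => simp
    | succ m ih =>
      rw [Nat.cast_succ, halt, ih, Nat.even_add_one]
      tauto
  have := key n
  tauto

/-! ### The infinite strip -/

/-- A packing 6-coloring: vertices of color `i` are at distance greater than `i`. -/
abbrev IsPacking6Coloring {V : Type*} (G : SimpleGraph V) (c : V → ℕ) : Prop :=
  IsPackingColoring G 6 (fun i => i) c

/-- The infinite strip: the `H`-graph with indices in `ℤ`, which covers every `H(r)` and contains
a copy of every `H_P(m)`. -/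
def Strip : SimpleGraph (Fin 3 × ℤ) :=
  SimpleGraph.fromRel fun x y =>
    ((x.1 = 0 ∧ y.1 = 0 ∨ x.1 = 2 ∧ y.1 = 2) ∧ y.2 = x.2 + 1) ∨
    ((x.1 = 0 ∧ y.1 = 1 ∨ x.1 = 1 ∧ y.1 = 2) ∧ x.2 = y.2) ∨
    (x.1 = 1 ∧ y.1 = 1 ∧ y.2 = x.2 + 1 ∧ Even x.2)

namespace Strip

/-- The distance in the strip in closed form. Two vertices `v_i`, `v_j` of different columns need a
detour of length two through an outer row. -/
def gap (x y : Fin 3 × ℤ) : ℕ :=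
  if x.1 = 1 ∧ y.1 = 1 ∧ x.2 ≠ y.2 then
    if x.2 / 2 = y.2 / 2 then 1 else (x.2 - y.2).natAbs + 2
  else ((x.1 : ℤ) - y.1).natAbs + (x.2 - y.2).natAbs

theorem gap_self (x : Fin 3 × ℤ) : gap x x = 0 := by simp [gap]

theorem adj_iff_gap_eq_one {x y : Fin 3 × ℤ} : Strip.Adj x y ↔ gap x y = 1 := by
  obtain ⟨a, i⟩ := x
  obtain ⟨b, j⟩ := y
  simp only [Strip, SimpleGraph.fromRel_adj, gap, ne_eq, Prod.mk.injEq, Int.even_iff]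
  fin_cases a <;> fin_cases b <;> grind

theorem gap_le_add_one {u v : Fin 3 × ℤ} (h : gap u v = 1) (y : Fin 3 × ℤ) :
    gap u y ≤ gap v y + 1 := by
  grind [gap]

theorem exists_gap_lt {x y : Fin 3 × ℤ} (hxy : x ≠ y) :
    ∃ x', gap x x' = 1 ∧ gap x' y < gap x y ∧ x'.2 ∈ Set.uIcc x.2 y.2 := by
  obtain ⟨a, i⟩ := x
  obtain ⟨b, j⟩ := y
  simp only [Set.mem_uIcc]
  by_cases ha : a = 1
  · by_cases hb : b = 1
    · by_cases hcol : i / 2 = j / 2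
      · exact ⟨(1, j), by grind [gap]⟩
      · have hij : i ≠ j := fun h => hcol (h ▸ rfl)
        subst ha hb
        exact ⟨(0, i), by simp [gap], by simp [gap, hcol, hij]; omega, by simp [le_total]⟩
    · exact ⟨(b, i), by grind [gap]⟩
  · rcases lt_trichotomy i j with h | rfl | h
    · exact ⟨(a, i + 1), by grind [gap]⟩
    · exact ⟨(1, i), by grind [gap, Fin.val_one]⟩
    · exact ⟨(a, i - 1), by grind [gap]⟩

theorem dist_eq_gap (x y : Fin 3 × ℤ) : Strip.dist x y = gap x y :=
  dist_eq_of_descent gap_self (fun _ _ h => gap_le_add_one (adj_iff_gap_eq_one.mp h))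
    (fun _ _ hxy => (exists_gap_lt hxy).imp fun _ h => ⟨adj_iff_gap_eq_one.mpr h.1, h.2.1⟩) x y

theorem preconnected : Strip.Preconnected :=
  preconnected_of_descent fun _ _ hxy =>
    (exists_gap_lt hxy).imp fun _ h => ⟨adj_iff_gap_eq_one.mpr h.1, h.2.1⟩

theorem isPacking6Coloring_iff {c : Fin 3 × ℤ → ℕ} :
    IsPacking6Coloring Strip c ↔
      (∀ x, 1 ≤ c x ∧ c x ≤ 6) ∧ ∀ x y, x ≠ y → c x = c y → c x < gap x y := by
  simp only [IsPacking6Coloring, IsPackingColoring, dist_eq_gap]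

theorem isPacking6Coloring_comp {c : Fin 3 × ℤ → ℕ} (hc : IsPacking6Coloring Strip c)
    {φ : Fin 3 × ℤ → Fin 3 × ℤ} (hφ : ∀ x y, gap (φ x) (φ y) = gap x y) :
    IsPacking6Coloring Strip (c ∘ φ) := by
  refine hc.comp (fun x y => by rw [dist_eq_gap, dist_eq_gap, hφ]) fun x y hxy heq => absurd ?_ hxy
  rw [← (preconnected x y).dist_eq_zero_iff, dist_eq_gap, ← hφ, heq, gap_self]

/-- The automorphism of the strip moving every column `k` places to the right. -/
def translate (k : ℤ) (x : Fin 3 × ℤ) : Fin 3 × ℤ := (x.1, x.2 + 2 * k)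

/-- The automorphism of the strip exchanging its outer rows. -/
def swapRows (x : Fin 3 × ℤ) : Fin 3 × ℤ := (x.1.rev, x.2)

/-- The automorphism of the strip reversing the order of the indices and exchanging the columns
`-1` and `0`. -/
def reflect (x : Fin 3 × ℤ) : Fin 3 × ℤ := (x.1, -1 - x.2)

theorem gap_translate (k : ℤ) (x y : Fin 3 × ℤ) :
    gap (translate k x) (translate k y) = gap x y := by
  grind [gap, translate]

theorem gap_swapRows (x y : Fin 3 × ℤ) : gap (swapRows x) (swapRows y) = gap x y := by
  grind [gap, swapRows, Fin.rev]

theorem gap_reflect (x y : Fin 3 × ℤ) : gap (reflect x) (reflect y) = gap x y := by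
  grind [gap, reflect]

/-- The copy of `H_P(m)` in the strip formed by columns `k, …, k + m - 1`. -/
def window (m : ℕ) (k : ℤ) (x : Fin 3 × Fin (2 * m)) : Fin 3 × ℤ := (x.1, 2 * k + x.2)

theorem window_injective (m : ℕ) (k : ℤ) : Function.Injective (window m k) := by
  rintro ⟨a, i⟩ ⟨b, j⟩ h
  simp only [window, Prod.mk.injEq] at h ⊢
  exact ⟨h.1, Fin.ext (by omega)⟩

theorem exists_window_eq {m : ℕ} {k : ℤ} {x : Fin 3 × ℤ} (hlo : 2 * k ≤ x.2)
    (hhi : x.2 < 2 * (k + m)) : ∃ x', window m k x' = x :=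
  ⟨(x.1, ⟨(x.2 - 2 * k).toNat, by omega⟩), Prod.ext rfl (by simp only [window]; omega)⟩

theorem hpGraph_adj_iff {m : ℕ} (k : ℤ) {x y : Fin 3 × Fin (2 * m)} :
    (HPGraph m).Adj x y ↔ Strip.Adj (window m k x) (window m k y) := by
  have hsucc (i j : Fin (2 * m)) : 2 * k + (j : ℤ) = 2 * k + i + 1 ↔ (j : ℕ) = i + 1 := by omega
  have heq (i j : Fin (2 * m)) : 2 * k + (i : ℤ) = 2 * k + j ↔ i = j := by
    rw [Fin.ext_iff]
    omega
  have heven (i : Fin (2 * m)) : Even (2 * k + (i : ℤ)) ↔ Even (i : ℕ) := by simp [Int.even_add]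
  rw [HPGraph, Strip, SimpleGraph.fromRel_adj, SimpleGraph.fromRel_adj,
    (window_injective m k).ne_iff]
  simp only [window, hsucc, heq, heven]

theorem hpGraph_dist (m : ℕ) (k : ℤ) (x y : Fin 3 × Fin (2 * m)) :
    (HPGraph m).dist x y = gap (window m k x) (window m k y) := by
  refine dist_eq_of_descent (d := fun x y => gap (window m k x) (window m k y))
    (fun _ => gap_self _) (fun _ _ h _ => gap_le_add_one ?_ _) (fun x y hxy => ?_) x y
  · exact adj_iff_gap_eq_one.mp ((hpGraph_adj_iff k).mp h)
  · obtain ⟨z, hadj, hlt, hz⟩ := exists_gap_lt ((window_injective m k).ne hxy)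
    obtain ⟨x', rfl⟩ : ∃ x', window m k x' = z := by
      have hx := x.2.isLt
      have hy := y.2.isLt
      simp only [window, Set.mem_uIcc] at hz
      exact exists_window_eq (by omega) (by omega)
    exact ⟨x', (hpGraph_adj_iff k).mpr (adj_iff_gap_eq_one.mpr hadj), hlt⟩

theorem isPacking6Coloring_comp_window {c : Fin 3 × ℤ → ℕ} (hc : IsPacking6Coloring Strip c)
    (m : ℕ) (k : ℤ) : IsPacking6Coloring (HPGraph m) (c ∘ window m k) :=
  hc.comp (fun x y => by rw [dist_eq_gap, hpGraph_dist m k])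
    fun _ _ hxy h => absurd (window_injective m k h) hxy

theorem isPacking6Coloring_of_windows {c : Fin 3 × ℤ → ℕ}
    (hc : ∀ k, IsPacking6Coloring (HPGraph 4) (c ∘ window 4 k)) : IsPacking6Coloring Strip c := by
  have hrange (x : Fin 3 × ℤ) : 1 ≤ c x ∧ c x ≤ 6 := by
    obtain ⟨x', hx⟩ : ∃ x', window 4 (x.2 / 2) x' = x :=
      exists_window_eq (by omega) (by omega)
    simpa [hx] using (hc (x.2 / 2)).1 x'
  refine isPacking6Coloring_iff.mpr ⟨hrange, fun x y hxy hcol => ?_⟩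
  by_contra! hle
  -- Equally colored vertices at distance at most six lie in a common window of four columns.
  have hnear : (x.2 - y.2).natAbs ≤ 6 := by
    have := (hrange x).2
    grind [gap]
  obtain ⟨k, hk⟩ : ∃ k, k = min x.2 y.2 / 2 := ⟨_, rfl⟩
  obtain ⟨x', rfl⟩ : ∃ x', window 4 k x' = x := exists_window_eq (by omega) (by omega)
  obtain ⟨y', rfl⟩ : ∃ y', window 4 k y' = y := exists_window_eq (by omega) (by omega)
  exact hle.not_gt (hpGraph_dist 4 k x' y' ▸ (hc k).2 x' y' (ne_of_apply_ne _ hxy) hcol)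

/-! ### Colorings of `H(r)` as periodic colorings of the strip -/

/-- The covering map from the strip onto `H(r)`. -/
def proj (r : ℕ) (x : Fin 3 × ℤ) : Fin 3 × ZMod (2 * r) := (x.1, x.2)

theorem proj_surjective (r : ℕ) : Function.Surjective (proj r) := by
  rintro ⟨a, z⟩
  obtain ⟨i, rfl⟩ := ZMod.intCast_surjective z
  exact ⟨(a, i), rfl⟩

theorem two_mul_le_gap_of_proj_eq {r : ℕ} {x y : Fin 3 × ℤ} (hxy : x ≠ y)
    (h : proj r x = proj r y) : 2 * r ≤ gap x y := by
  obtain ⟨a, i⟩ := x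
  obtain ⟨b, j⟩ := y
  obtain ⟨rfl, hij⟩ := Prod.mk.inj h
  have hdvd := (ZMod.intCast_eq_intCast_iff_dvd_sub _ _ _).mp hij
  have hne : j - i ≠ 0 := sub_ne_zero.mpr fun h => hxy (by rw [h])
  have hle := Int.natAbs_le_of_dvd_ne_zero hdvd hne
  grind [gap]

theorem hGraph_adj_proj {r : ℕ} (hr : 1 ≤ r) {x y : Fin 3 × ℤ} (h : Strip.Adj x y) :
    (HGraph r).Adj (proj r x) (proj r y) := by
  have hproj : proj r x ≠ proj r y := fun heq => by
    have := two_mul_le_gap_of_proj_eq h.ne heq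
    have := adj_iff_gap_eq_one.mp h
    omega
  have hcast {i j : ℤ} (h : j = i + 1) : (j : ZMod (2 * r)) = i + 1 := by simp [h]
  have heven {i : ℤ} (h : Even i) : ∃ k : ZMod (2 * r), (i : ZMod (2 * r)) = 2 * k := by
    obtain ⟨k, rfl⟩ := even_iff_two_dvd.mp h
    exact ⟨k, by push_cast; rfl⟩
  rw [Strip, SimpleGraph.fromRel_adj] at h
  rw [HGraph, SimpleGraph.fromRel_adj]
  refine ⟨hproj, h.2.imp ?_ ?_⟩
  all_goals
    refine Or.imp (And.imp_right hcast) (Or.imp (And.imp_right (congrArg _)) ?_)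
    rintro ⟨hx, hy, hsucc, hev⟩
    obtain ⟨k, hk⟩ := heven hev
    exact ⟨hx, hy, k, hk, hk ▸ hcast hsucc⟩

theorem hGraph_dist_proj_le {r : ℕ} (hr : 1 ≤ r) (x y : Fin 3 × ℤ) :
    (HGraph r).dist (proj r x) (proj r y) ≤ Strip.dist x y := by
  obtain ⟨p, hp⟩ := (preconnected x y).exists_walk_length_eq_dist
  let φ : Strip →g HGraph r := ⟨proj r, hGraph_adj_proj hr⟩
  calc (HGraph r).dist (φ x) (φ y) ≤ (p.map φ).length := SimpleGraph.dist_le _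
    _ = Strip.dist x y := (p.length_map φ).trans hp

theorem hGraph_preconnected {r : ℕ} (hr : 1 ≤ r) : (HGraph r).Preconnected :=
  preconnected.map (⟨proj r, hGraph_adj_proj hr⟩ : Strip →g HGraph r) (proj_surjective r)

theorem even_of_intCast_eq_two_mul {r : ℕ} {i : ℤ} {z : ZMod (2 * r)}
    (h : (i : ZMod (2 * r)) = 2 * z) : Even i := by
  have hcast := congrArg (ZMod.castHom (dvd_mul_right 2 r) (ZMod 2)) h
  have htwo : (2 : ZMod 2) = 0 := rfl
  rw [map_intCast, map_mul, map_ofNat, htwo, zero_mul] at hcast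
  exact ZMod.intCast_eq_zero_iff_even.mp hcast

theorem exists_lift_of_hGraph_adj {r : ℕ} {x : Fin 3 × ℤ} {y' : Fin 3 × ZMod (2 * r)}
    (h : (HGraph r).Adj (proj r x) y') : ∃ y, Strip.Adj x y ∧ proj r y = y' := by
  obtain ⟨a, i⟩ := x
  obtain ⟨b, z⟩ := y'
  rw [HGraph, SimpleGraph.fromRel_adj] at h
  simp only [Strip, SimpleGraph.fromRel_adj, proj] at h ⊢
  rcases h.2 with (⟨hab, hz⟩ | ⟨hab, hz⟩ | ⟨ha, hb, k, hk, hz⟩) |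
    (⟨hab, hz⟩ | ⟨hab, hz⟩ | ⟨ha, hb, k, hz, hk⟩)
  · exact ⟨(b, i + 1), ⟨by simp, by grind⟩, by simp [hz]⟩
  · exact ⟨(b, i), ⟨by grind, by grind⟩, by simp [hz]⟩
  · have hi := even_of_intCast_eq_two_mul hk
    exact ⟨(b, i + 1), ⟨by simp, by grind⟩, by simp [hz, hk]⟩
  · exact ⟨(b, i - 1), ⟨by grind, by grind⟩, by simp [hz]⟩
  · exact ⟨(b, i), ⟨by grind, by grind⟩, by simp [hz]⟩
  · have hi : Even (i - 1) := even_of_intCast_eq_two_mul (r := r) (z := k) (by simp [hk])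
    exact ⟨(b, i - 1), ⟨by grind, by grind⟩, by simp [hz, hk]⟩

/-- Invariance under translation by `n` columns. -/
def ColumnPeriodic (n : ℕ) (c : Fin 3 × ℤ → ℕ) : Prop := ∀ a i, c (a, i + 2 * n) = c (a, i)

theorem ColumnPeriodic.exists_comp_proj_eq {r : ℕ} {c : Fin 3 × ℤ → ℕ} (hc : ColumnPeriodic r c) :
    ∃ c' : Fin 3 × ZMod (2 * r) → ℕ, c' ∘ proj r = c := by
  refine ⟨fun x => c (x.1, x.2.cast), funext fun ⟨a, i⟩ => ?_⟩
  have hper : Function.Periodic (fun i => c (a, i)) ((2 * r : ℕ) : ℤ) := fun i => by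
    simpa using hc a i
  simp only [proj, Function.comp_apply, ZMod.coe_intCast, Int.emod_def, mul_comm ((2 * r : ℕ) : ℤ)]
  exact hper.sub_int_mul_eq (i / (2 * r : ℕ))

theorem exists_hGraph_coloring_iff {r : ℕ} (hr : 4 ≤ r) :
    (∃ c, IsPacking6Coloring (HGraph r) c) ↔
      ∃ c, IsPacking6Coloring Strip c ∧ ColumnPeriodic r c := by
  have hr' : 1 ≤ r := by omega
  constructor
  · rintro ⟨c, hc⟩
    refine ⟨c ∘ proj r, hc.comp (hGraph_dist_proj_le hr') fun x y hxy h => ?_, fun a i => ?_⟩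
    · have := (hc.1 (proj r x)).2
      have := two_mul_le_gap_of_proj_eq hxy h
      rw [dist_eq_gap]
      omega
    · have hcast : ((2 * r : ℕ) : ZMod (2 * r)) = 0 := ZMod.natCast_self _
      push_cast at hcast
      simp [proj, hcast]
  · rintro ⟨c, hc, hper⟩
    obtain ⟨c', rfl⟩ := hper.exists_comp_proj_eq
    exact ⟨c', hc.of_comp (proj_surjective r) (fun _ _ => exists_lift_of_hGraph_adj)
      (hGraph_preconnected hr')⟩

/-! ### Closed walks as periodic colorings of the strip -/

theorem window_shift {m n : ℕ} {k l : ℤ} {a : Fin 3} {i : Fin (2 * m)} {j : Fin (2 * n)}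
    (h : 2 * k + i = 2 * l + j) : window m k (a, i) = window n l (a, j) :=
  Prod.ext rfl h

theorem glueColoring_comp_window (c : Fin 3 × ℤ → ℕ) (k : ℤ) :
    glueColoring (c ∘ window 3 k) (c ∘ window 3 (k + 1)) = c ∘ window 4 k := by
  funext x
  simp only [glueColoring, Function.comp_apply]
  split_ifs
  · rfl
  · exact congrArg c (window_shift (by dsimp only; omega))

theorem dArc_comp_window_iff {c : Fin 3 × ℤ → ℕ} {k : ℤ} :
    DArc (c ∘ window 3 k) (c ∘ window 3 (k + 1)) ↔
      IsPacking6Coloring (HPGraph 4) (c ∘ window 4 k) := by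
  rw [DArc, glueColoring_comp_window]
  exact and_iff_right fun a t ht => congrArg c (window_shift (by dsimp only; omega))

theorem exists_eq_comp_window_of_dArc {W : ℤ → Fin 3 × Fin (2 * 3) → ℕ}
    (hW : ∀ k, DArc (W k) (W (k + 1))) : ∃ c : Fin 3 × ℤ → ℕ, ∀ k, W k = c ∘ window 3 k := by
  have hshift (a : Fin 3) (j : ℕ) : ∀ (k : ℤ) (s t : Fin (2 * 3)), (t : ℕ) = s + 2 * j →
      W k (a, t) = W (k + j) (a, s) := by
    induction j with
    | zero => exact fun k s t h => by rw [Fin.ext h, Nat.cast_zero, add_zero]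
    | succ j ih =>
      intro k s t h
      rw [(hW k).1 a t (by omega), ih (k + 1) s _ (by dsimp only; omega)]
      congr 1
      push_cast
      ring
  refine ⟨fun x => W (x.2 / 2) (x.1, ⟨(x.2 % 2).toNat, by omega⟩), fun k => funext ?_⟩
  rintro ⟨a, t⟩
  rw [Function.comp_apply, hshift a (t / 2) k ⟨t % 2, by omega⟩ t (Nat.mod_add_div _ 2).symm]
  simp only [window]
  congr 2
  · omega
  · exact Fin.ext (by dsimp only; omega)

theorem columnPeriodic_iff {n : ℕ} {c : Fin 3 × ℤ → ℕ} :
    ColumnPeriodic n c ↔ ∀ k, c ∘ window 3 (k + n) = c ∘ window 3 k := by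
  have hwin (k : ℤ) (x : Fin 3 × Fin (2 * 3)) :
      window 3 (k + n) x = ((window 3 k x).1, (window 3 k x).2 + 2 * n) :=
    Prod.ext rfl (by simp only [window]; ring)
  constructor
  · exact fun h k => funext fun x => by simp only [Function.comp_apply, hwin, h _ _]
  · intro h a i
    obtain ⟨x, hx⟩ : ∃ x, window 3 (i / 2) x = (a, i) := exists_window_eq (by omega) (by omega)
    have hxn : window 3 (i / 2 + n) x = (a, i + 2 * n) := by rw [hwin, hx]
    rw [← hx, ← hxn]
    exact congrFun (h (i / 2)) x

theorem exists_closed_walk_iff {n : ℕ} (hn : 1 ≤ n) :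
    (∃ w : ℕ → Fin 3 × Fin (2 * 3) → ℕ,
      (∀ i, i ≤ n → IsPacking6Coloring (HPGraph 3) (w i)) ∧
      (∀ i, i < n → DArc (w i) (w (i + 1))) ∧ w n = w 0) ↔
      ∃ c, IsPacking6Coloring Strip c ∧ ColumnPeriodic n c := by
  constructor
  · rintro ⟨w, -, harc, hclosed⟩
    obtain ⟨W, hW, hper⟩ := exists_periodic_chain_of_closed hn harc hclosed
    obtain ⟨c, hc⟩ := exists_eq_comp_window_of_dArc hW
    simp only [hc] at hW hper
    exact ⟨c, isPacking6Coloring_of_windows fun k => dArc_comp_window_iff.mp (hW k),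
      columnPeriodic_iff.mpr hper⟩
  · rintro ⟨c, hc, hper⟩
    refine ⟨fun i => c ∘ window 3 i, fun i _ => isPacking6Coloring_comp_window hc 3 i,
      fun i _ => ?_, by simpa using columnPeriodic_iff.mp hper 0⟩
    exact_mod_cast dArc_comp_window_iff.mpr (isPacking6Coloring_comp_window hc 4 i)

end Strip

/-! ### Refuting colorings by exhaustive search -/

/-- The bit mask of a set of natural numbers. -/
def bitset (l : List ℕ) : ℕ := l.foldr (fun b m => 1 <<< b ||| m) 0

theorem testBit_bitset {l : List ℕ} {b : ℕ} : (bitset l).testBit b ↔ b ∈ l := by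
  induction l with
  | nil => simp [bitset]
  | cons a l ih =>
    rw [bitset, List.foldr_cons, ← bitset, Nat.testBit_or, Bool.or_eq_true, ih, Nat.one_shiftLeft,
      Nat.testBit_two_pow, List.mem_cons, decide_eq_true_iff, eq_comm]

/-- Backtracking search for literals, one from each clause, that avoid the bit mask `excluded` and
are pairwise free of conflicts; the value `true` certifies that there are none. -/
def refutes (conflicts : ℕ → List ℕ) : List (List ℕ) → ℕ → Bool
  | [], _ => false
  | clause :: rest, excluded => clause.all fun b =>
      excluded.testBit b || refutes conflicts rest (excluded ||| bitset (conflicts b))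

theorem refutes_eq_false {conflicts : ℕ → List ℕ} {S : Set ℕ}
    (hS : ∀ b ∈ S, ∀ b' ∈ conflicts b, b' ∉ S) {clauses : List (List ℕ)}
    (hsat : ∀ clause ∈ clauses, ∃ b ∈ clause, b ∈ S) {excluded : ℕ}
    (hexcl : ∀ b ∈ S, excluded.testBit b = false) : refutes conflicts clauses excluded = false := by
  induction clauses generalizing excluded with
  | nil => rfl
  | cons clause rest ih =>
    obtain ⟨hclause, hrest⟩ := List.forall_mem_cons.mp hsat
    obtain ⟨b, hb, hbS⟩ := hclause
    refine List.all_eq_false.mpr ⟨b, hb, ?_⟩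
    rw [hexcl b hbS, Bool.false_or, Bool.not_eq_true]
    refine ih hrest fun b' hb' => ?_
    rw [Nat.testBit_or, hexcl b' hb', Bool.false_or, ← Bool.not_eq_true, testBit_bitset]
    exact fun h => hS b hbS b' h hb'

namespace Strip

/-- The cells with index between `-5` and `5`, numbered `0, …, 32`. -/
def cell (p : ℕ) : Fin 3 × ℤ := (Fin.ofNat 3 p, (p / 3 : ℕ) - 5)

/-- A literal `(x, k)` says that cell `x` has color `k`; literals are numbered by `ℕ`, eight
consecutive numbers for each cell. -/
def decode (b : ℕ) : (Fin 3 × ℤ) × ℕ := (cell (b / 8), b % 8)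

/-- The number of a literal, inverting `decode` for cells with index between `-5` and `5`. -/
def encode (q : (Fin 3 × ℤ) × ℕ) : ℕ := 8 * (3 * (q.1.2 + 5).toNat + q.1.1) + q.2

/-- The literals excluded by literal `b` in a packing coloring: other colors of the same cell, and
the same color on cells too close to it. -/
def conflicts (b : ℕ) : List ℕ :=
  ((List.range 8).filter (· ≠ b % 8)).map (8 * (b / 8) + ·) ++
    ((List.range 33).filter fun p => p ≠ b / 8 ∧ gap (cell (b / 8)) (cell p) ≤ b % 8).map
      (8 * · + b % 8)

theorem cell_injective : Function.Injective cell := by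
  intro p q h
  simp only [cell, Prod.mk.injEq, Fin.ext_iff, Fin.val_ofNat] at h
  omega

theorem not_conflict {c : Fin 3 × ℤ → ℕ} (hc : IsPacking6Coloring Strip c) {b b' : ℕ}
    (hb : c (decode b).1 = (decode b).2) (hconfl : b' ∈ conflicts b) :
    c (decode b').1 ≠ (decode b').2 := by
  simp only [conflicts, decide_not, List.mem_append, List.mem_map, List.mem_filter, List.mem_range,
    Bool.not_eq_true', decide_eq_false_iff_not, decide_eq_true_iff] at hconfl
  simp only [decode] at hb ⊢
  rcases hconfl with ⟨k, ⟨hk, hne⟩, rfl⟩ | ⟨p, ⟨-, hne, hgap⟩, rfl⟩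
  · rw [show (8 * (b / 8) + k) / 8 = b / 8 by omega, hb]
    omega
  · rw [show (8 * p + b % 8) / 8 = p by omega, show (8 * p + b % 8) % 8 = b % 8 by omega]
    intro hp
    have := (isPacking6Coloring_iff.mp hc).2 _ _ (cell_injective.ne hne.symm) (hb.trans hp.symm)
    omega

/-- The clause saying that the color of `x` belongs to `l`. -/
def oneOf (x : Fin 3 × ℤ) (l : List ℕ) : List ((Fin 3 × ℤ) × ℕ) := l.map (x, ·)

theorem exists_mem_oneOf {c : Fin 3 × ℤ → ℕ} {x : Fin 3 × ℤ} {l : List ℕ} :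
    (∃ q ∈ oneOf x l, c q.1 = q.2) ↔ c x ∈ l := by
  simp [oneOf]

/-- The clauses saying that every cell with index between `-5` and `5` has a color. Central indices
come first because the assumptions to be refuted concern them. -/
def palette : List (List ((Fin 3 × ℤ) × ℕ)) :=
  [0, 1, -1, 2, -2, 3, -3, 4, -4, 5, -5].flatMap fun i =>
    [2, 0, 1].map fun a => oneOf (a, i) [1, 2, 3, 4, 5, 6]

theorem exists_color_of_mem_palette {c : Fin 3 × ℤ → ℕ} (hc : IsPacking6Coloring Strip c)
    {l : List ((Fin 3 × ℤ) × ℕ)} (hl : l ∈ palette) : ∃ q ∈ l, c q.1 = q.2 := by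
  simp only [palette, List.mem_flatMap, List.mem_map] at hl
  obtain ⟨i, -, a, -, rfl⟩ := hl
  rw [exists_mem_oneOf]
  have := hc.1 (a, i)
  simp only [List.mem_cons, List.not_mem_nil, or_false]
  omega

/-- The search finds no packing 6-coloring of the cells with index between `-5` and `5` that
satisfies the clauses `C`. The first conjunct says that the clauses stay within the numbering. -/
abbrev Refutable (C : List (List ((Fin 3 × ℤ) × ℕ))) : Prop :=
  (∀ l ∈ C ++ palette, ∀ q ∈ l, decode (encode q) = q) ∧
    refutes conflicts ((C ++ palette).map (·.map encode)) 0

theorem Refutable.false {C : List (List ((Fin 3 × ℤ) × ℕ))} (hC : Refutable C)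
    {c : Fin 3 × ℤ → ℕ} (hc : IsPacking6Coloring Strip c)
    (hsat : ∀ l ∈ C, ∃ q ∈ l, c q.1 = q.2) : False := by
  have hsat' : ∀ l ∈ C ++ palette, ∃ q ∈ l, c q.1 = q.2 := fun l hl =>
    (List.mem_append.mp hl).elim (hsat l) (exists_color_of_mem_palette hc)
  refine Bool.false_ne_true (Eq.trans (Eq.symm ?_) hC.2)
  refine refutes_eq_false (S := {b | c (decode b).1 = (decode b).2})
    (fun b hb b' hb' => not_conflict hc hb hb') ?_ fun b _ => Nat.zero_testBit b
  rw [List.forall_mem_map]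
  intro l hl
  obtain ⟨q, hq, hcol⟩ := hsat' l hl
  exact ⟨encode q, List.mem_map_of_mem hq, by rwa [Set.mem_ofPred_eq, hC.1 l hl q hq]⟩

/-! ### The parity of the period -/

/-- Some vertex of row `a` in column `k` has color `x`. -/
def HasColor (c : Fin 3 × ℤ → ℕ) (k : ℤ) (a : Fin 3) (x : ℕ) : Prop :=
  c (a, 2 * k) = x ∨ c (a, 2 * k + 1) = x

theorem exists_outer_two_or_three {c : Fin 3 × ℤ → ℕ} (hc : IsPacking6Coloring Strip c) :
    (HasColor c 0 0 2 ∨ HasColor c 0 0 3) ∨ HasColor c 0 2 2 ∨ HasColor c 0 2 3 := by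
  by_contra hnone
  refine Refutable.false (C := [oneOf (2, 0) [1, 4, 5, 6], oneOf (0, 0) [1, 4, 5, 6],
    oneOf (2, 1) [1, 4, 5, 6], oneOf (0, 1) [1, 4, 5, 6]]) (by decide +kernel) hc ?_
  have h00 := hc.1 (0, 0)
  have h01 := hc.1 (0, 1)
  have h20 := hc.1 (2, 0)
  have h21 := hc.1 (2, 1)
  simp only [HasColor, mul_zero, zero_add] at hnone
  simp only [List.forall_mem_cons, exists_mem_oneOf]
  simp only [List.mem_cons, List.not_mem_nil, or_false, false_implies, implies_true, and_true]
  omega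

theorem not_two_of_three_of_no_three {c : Fin 3 × ℤ → ℕ} (hc : IsPacking6Coloring Strip c)
    (hthree : HasColor c (-1) 0 3) (hno0 : ¬HasColor c 0 0 3) (hno2 : ¬HasColor c 0 2 3) :
    ¬HasColor c 0 2 2 := by
  intro htwo
  refine Refutable.false (C := [[((0, -2), 3), ((0, -1), 3)], [((2, 0), 2), ((2, 1), 2)],
    oneOf (2, 0) [1, 2, 4, 5, 6], oneOf (2, 1) [1, 2, 4, 5, 6],
    oneOf (0, 0) [1, 2, 4, 5, 6], oneOf (0, 1) [1, 2, 4, 5, 6]]) (by decide +kernel) hc ?_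
  have h00 := hc.1 (0, 0)
  have h01 := hc.1 (0, 1)
  have h20 := hc.1 (2, 0)
  have h21 := hc.1 (2, 1)
  simp only [HasColor, Int.reduceMul, Int.reduceNeg, Int.reduceAdd, mul_zero, zero_add]
    at hthree htwo hno0 hno2
  simp only [List.forall_mem_cons, exists_mem_oneOf, List.exists_mem_cons_iff]
  simp only [List.mem_cons, List.not_mem_nil, or_false, false_and, exists_false, false_implies,
    implies_true, and_true]
  omega

theorem eq_one_of_two_of_no_three {c : Fin 3 × ℤ → ℕ} (hc : IsPacking6Coloring Strip c)
    (htwo : c (2, 0) = 2) (hno0 : ¬HasColor c 0 0 3) (hno2 : ¬HasColor c 0 2 3) : c (2, 1) = 1 := by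
  by_contra hone
  refine Refutable.false (C := [oneOf (2, 0) [2], oneOf (2, 1) [2, 4, 5, 6],
    oneOf (0, 0) [1, 2, 4, 5, 6], oneOf (0, 1) [1, 2, 4, 5, 6]]) (by decide +kernel) hc ?_
  have h00 := hc.1 (0, 0)
  have h01 := hc.1 (0, 1)
  have h21 := hc.1 (2, 1)
  simp only [HasColor, mul_zero, zero_add] at hno0 hno2
  simp only [List.forall_mem_cons, exists_mem_oneOf]
  simp only [List.mem_cons, List.not_mem_nil, or_false, false_implies, implies_true, and_true]
  omega

section Marked

variable {c : Fin 3 × ℤ → ℕ} {k : ℤ} {a : Fin 3}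

theorem hasColor_comp_translate {j : ℤ} {x : ℕ} :
    HasColor (c ∘ translate j) k a x ↔ HasColor c (k + j) a x := by
  simp only [HasColor, translate, Function.comp_apply, mul_add, add_right_comm]

theorem hasColor_comp_reflect {x : ℕ} :
    HasColor (c ∘ reflect) k a x ↔ HasColor c (-1 - k) a x := by
  simp only [HasColor, reflect, Function.comp_apply]
  rw [or_comm, show -1 - (2 * k + 1) = 2 * (-1 - k) by ring,
    show -1 - 2 * k = 2 * (-1 - k) + 1 by ring]

/-- Outer row `a` is marked in column `k` if it has a vertex of color 3 there, or if the opposite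
row has one of color 2 but none of color 3. In a packing 6-coloring exactly one outer row of each
column is marked, and the marks alternate between the two rows. -/
def Marked (c : Fin 3 × ℤ → ℕ) (k : ℤ) (a : Fin 3) : Prop :=
  HasColor c k a 3 ∨ ¬HasColor c k a.rev 3 ∧ HasColor c k a.rev 2

theorem marked_comp_translate {j : ℤ} : Marked (c ∘ translate j) k a ↔ Marked c (k + j) a := by
  simp only [Marked, hasColor_comp_translate]

theorem marked_comp_swapRows : Marked (c ∘ swapRows) k a ↔ Marked c k a.rev := Iff.rfl

theorem exists_marked (hc : IsPacking6Coloring Strip c) (k : ℤ) :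
    Marked c k 0 ∨ Marked c k 2 := by
  have h := exists_outer_two_or_three (isPacking6Coloring_comp hc (gap_translate k))
  simp only [hasColor_comp_translate, zero_add] at h
  change (_ ∨ ¬HasColor c k 2 3 ∧ HasColor c k 2 2) ∨ _ ∨ ¬HasColor c k 0 3 ∧ HasColor c k 0 2
  tauto

theorem lt_natAbs_sub_of_eq (hc : IsPacking6Coloring Strip c) (ha : a ≠ 1) {i j : ℤ}
    (hij : i ≠ j) (hcol : c (a, i) = c (a, j)) : c (a, i) < (i - j).natAbs := by
  simpa [gap, ha] using (isPacking6Coloring_iff.mp hc).2 (a, i) (a, j) (by simpa) hcol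

theorem not_three_of_three (hc : IsPacking6Coloring Strip c) (hl : HasColor c (-1) 0 3) :
    ¬HasColor c 0 0 3 := by
  intro hr
  simp only [HasColor, Int.reduceMul, Int.reduceNeg, Int.reduceAdd, mul_zero, zero_add] at hl hr
  rcases hl with hl | hl <;> rcases hr with hr | hr <;>
  · have := lt_natAbs_sub_of_eq hc (by decide) (by decide) (hl.trans hr.symm)
    omega

theorem not_two_of_two_of_no_three (hc : IsPacking6Coloring Strip c)
    (hno : ∀ k, k = -1 ∨ k = 0 → ¬HasColor c k 0 3 ∧ ¬HasColor c k 2 3)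
    (hl : HasColor c (-1) 2 2) : ¬HasColor c 0 2 2 := by
  intro hr
  have hends : c (2, -2) = 2 ∧ c (2, 1) = 2 := by
    simp only [HasColor, Int.reduceMul, Int.reduceNeg, Int.reduceAdd, mul_zero, zero_add] at hl hr
    rcases hl with hl | hl <;> rcases hr with hr | hr <;>
    · have := lt_natAbs_sub_of_eq hc (by decide) (by decide) (hl.trans hr.symm)
      omega
  have hinner {d : Fin 3 × ℤ → ℕ} (hd : IsPacking6Coloring Strip d) (htwo : d (2, -2) = 2)
      (hno0 : ¬HasColor d (-1) 0 3) (hno2 : ¬HasColor d (-1) 2 3) : d (2, -1) = 1 := by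
    simpa [translate] using eq_one_of_two_of_no_three
      (isPacking6Coloring_comp hd (gap_translate (-1))) (by simpa [translate] using htwo)
      (by rwa [hasColor_comp_translate, zero_add]) (by rwa [hasColor_comp_translate, zero_add])
  have hleft : c (2, -1) = 1 := hinner hc hends.1 (hno _ (by simp)).1 (hno _ (by simp)).2
  have hright : c (2, 0) = 1 := by
    simpa [reflect] using hinner (isPacking6Coloring_comp hc gap_reflect)
      (by simpa [reflect] using hends.2) (mt hasColor_comp_reflect.mp (hno _ (by simp)).1)
      (mt hasColor_comp_reflect.mp (hno _ (by simp)).2)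
  have := lt_natAbs_sub_of_eq hc (by decide) (by decide) (hleft.trans hright.symm)
  omega

theorem not_marked_zero_of_marked (hc : IsPacking6Coloring Strip c) (hl : Marked c (-1) 0) :
    ¬Marked c 0 0 := by
  intro hr
  by_cases hl3 : HasColor c (-1) 0 3
  · obtain hr3 | ⟨hno, htwo⟩ := hr
    · exact not_three_of_three hc hl3 hr3
    · exact not_two_of_three_of_no_three hc hl3 (not_three_of_three hc hl3) hno htwo
  · obtain ⟨hlno, hltwo⟩ := hl.resolve_left hl3
    by_cases hr3 : HasColor c 0 0 3
    · exact not_two_of_three_of_no_three (isPacking6Coloring_comp hc gap_reflect)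
        (hasColor_comp_reflect.mpr hr3) (mt hasColor_comp_reflect.mp hl3)
        (mt hasColor_comp_reflect.mp hlno) (hasColor_comp_reflect.mpr hltwo)
    · obtain ⟨hrno, hrtwo⟩ := hr.resolve_left hr3
      refine not_two_of_two_of_no_three hc ?_ hltwo hrtwo
      rintro k (rfl | rfl)
      exacts [⟨hl3, hlno⟩, ⟨hr3, hrno⟩]

theorem marked_succ_iff (hc : IsPacking6Coloring Strip c) (k : ℤ) :
    Marked c (k + 1) 0 ↔ ¬Marked c k 0 := by
  have hshift {d : Fin 3 × ℤ → ℕ} (hd : IsPacking6Coloring Strip d) (hk : Marked d k 0) :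
      ¬Marked d (k + 1) 0 := by
    have h := not_marked_zero_of_marked (isPacking6Coloring_comp hd (gap_translate (k + 1)))
    rw [marked_comp_translate, marked_comp_translate, zero_add, neg_add_cancel_comm_assoc] at h
    exact h hk
  refine ⟨fun hsucc hk => hshift hc hk hsucc, fun hk => ?_⟩
  by_contra hsucc
  exact hshift (isPacking6Coloring_comp hc gap_swapRows)
    (marked_comp_swapRows.mpr ((exists_marked hc k).resolve_left hk))
    (marked_comp_swapRows.mpr ((exists_marked hc (k + 1)).resolve_left hsucc))

theorem ColumnPeriodic.even {n : ℕ} (hper : ColumnPeriodic n c) (hc : IsPacking6Coloring Strip c) :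
    Even n := by
  have hcolor (a : Fin 3) (x : ℕ) : HasColor c n a x ↔ HasColor c 0 a x := by
    have := hper a 0
    have := hper a 1
    simp_all [HasColor, add_comm]
  have hmarked : Marked c n 0 ↔ Marked c 0 0 := by simp only [Marked, hcolor]
  exact even_of_alternating (P := (Marked c · 0)) (marked_succ_iff hc) hmarked

end Marked

/-- The packing 6-coloring of the strip with period two columns, whose rows repeat `1213`, `4151`
and `1312`. -/
def periodTwoColoring (x : Fin 3 × ℤ) : ℕ :=
  if x.1 = 1 then if x.2 % 4 = 0 then 4 else if x.2 % 4 = 2 then 5 else 1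
  else if x.2 % 2 = 0 then 1 else if x.1 = 0 ↔ x.2 % 4 = 1 then 2 else 3

theorem isPacking6Coloring_periodTwoColoring : IsPacking6Coloring Strip periodTwoColoring := by
  refine isPacking6Coloring_iff.mpr ⟨fun x => by grind [periodTwoColoring], ?_⟩
  rintro ⟨a, i⟩ ⟨b, j⟩ hne hcol
  grind [gap, periodTwoColoring]

theorem columnPeriodic_periodTwoColoring {n : ℕ} (hn : Even n) :
    ColumnPeriodic n periodTwoColoring := by
  obtain ⟨m, rfl⟩ := hn
  intro a i
  grind [periodTwoColoring]

theorem exists_columnPeriodic_coloring_iff {n : ℕ} :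
    (∃ c, IsPacking6Coloring Strip c ∧ ColumnPeriodic n c) ↔ Even n :=
  ⟨fun ⟨_, hc, hper⟩ => hper.even hc, fun hn =>
    ⟨_, isPacking6Coloring_periodTwoColoring, columnPeriodic_periodTwoColoring hn⟩⟩

end Strip

/-- For `r ≥ 4`, `H(r)` admits a packing 6-coloring iff the digraph `D` (whose vertices
are the packing 6-colorings of `H_P(3)` and whose arcs are given by `DArc`) contains a
closed directed walk of length `r - 2`. -/
theorem packing_6_coloring_iff_closed_walk (r : ℕ) (hr : 4 ≤ r) :
    (∃ c : Fin 3 × ZMod (2 * r) → ℕ,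
      IsPackingColoring (HGraph r) 6 (fun i => i) c) ↔
    (∃ w : ℕ → (Fin 3 × Fin (2 * 3) → ℕ),
      (∀ i, i ≤ r - 2 → IsPackingColoring (HPGraph 3) 6 (fun i => i) (w i)) ∧
      (∀ i, i < r - 2 → DArc (w i) (w (i + 1))) ∧
      w (r - 2) = w 0) := by
  rw [Strip.exists_hGraph_coloring_iff hr, Strip.exists_closed_walk_iff (by omega),
    Strip.exists_columnPeriodic_coloring_iff, Strip.exists_columnPeriodic_coloring_iff,
    Nat.even_sub (by omega), iff_true_right even_two]
end
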